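/- For every integer p ≥ 2, every n ≥ 1, and every k with 0 ≤ k ≤ n, the natural number (p-1)·n + k divides (p-1)·(n-k)·C((p-1)·n + k, k). -/

import Mathlib

theorem Nat.dvd_mul_choose_self (m k : ℕ) : m ∣ k * m.choose k := by
  cases k with
  | zero => simp
  | succ k =>
    cases m with
    | zero => simp
    | succ m => exact ⟨m.choose k, by rw [Nat.add_one_mul_choose_eq, mul_comm]⟩

theorem fuss_catalan_triangle_divisibility (p : ℕ) (hp : 2 ≤ p) (n : ℕ) (hn : 1 ≤ n)
    (k : ℕ) (hk : k ≤ n) :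
    ((p - 1) * n + k) ∣ (p - 1) * (n - k) * Nat.choose ((p - 1) * n + k) k := by
  generalize p - 1 = q
  obtain ⟨d, rfl⟩ := Nat.exists_eq_add_of_le hk
  rw [Nat.add_sub_cancel_left]
  generalize hc : (q * (k + d) + k).choose k = c
  have hdvd : q * (k + d) + k ∣ (q + 1) * (k * c) :=
    Dvd.dvd.mul_left (hc ▸ Nat.dvd_mul_choose_self _ k) _
  rw [Nat.dvd_add_iff_left hdvd]
  exact ⟨c, by ring⟩
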